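/- For every real polynomial P of degree at most q (q ∈ ℕ, q ≥ 1) and every integer k ≥ 0: sup over t in [0, 1/(2q²)] of |P^{(k)}(t)| is at most (2^{2k+1}·q^{4k}/(2k−1)!!) times the supremum over integers n ≥ q² of |P(1/n)|. -/

import Mathlib

/-!
Among polynomials of degree at most `q` bounded by `1` on `[-1, 1]`, the Chebyshev polynomial `T_q`
has the largest `k`-th derivative at `1`, and that derivative is at most `q ^ (2k) / (2k - 1)‼`.
Rescaling gives Markov's bound at an endpoint of any interval; since every point of `[a, b]` is the
endpoint of a subinterval of length at least `(b - a) / 2`, it gives a bound on all of `[a, b]`.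

It remains to bound `M = max |P|` on `[0, 1 / N]`, where `q ^ 2 ≤ N`, by the supremum `S` of `|P|`
on the grid `{1 / n | n ≥ N}`. If the maximum is attained off the grid and away from `0`, it is at a
critical point `x ∈ [1 / (n + 1), 1 / n]` with `n ≥ N`. The endpoint bound for `k = 2` gives
`|P''| ≤ (4 / 3) (n + 1) ^ 2 q ^ 4 M` there, whereas the gap has length only `1 / (n (n + 1))`, so
Taylor's formula at `x` yields `M ≤ S + M / 6`.
-/

open Polynomial Set Filter

lemma iterate_derivative_comp_C_mul_X_add_C {R : Type*} [CommSemiring R] (P : R[X]) (a b : R)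
    (k : ℕ) :
    derivative^[k] (P.comp (C a * X + C b)) =
      C (a ^ k) * (derivative^[k] P).comp (C a * X + C b) := by
  induction k with
  | zero => simp
  | succ k ih =>
    rw [Function.iterate_succ_apply', ih, Function.iterate_succ_apply', derivative_C_mul,
      derivative_comp]
    simp only [derivative_add, derivative_C_mul, derivative_X, derivative_C, pow_succ, C_mul]
    ring

lemma iteratedDeriv_polynomial_eval {𝕜 : Type*} [NontriviallyNormedField 𝕜] (P : 𝕜[X]) (k : ℕ) :
    iteratedDeriv k (fun x ↦ P.eval x) = fun x ↦ (derivative^[k] P).eval x := by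
  induction k generalizing P with
  | zero => simp
  | succ k ih =>
    rw [iteratedDeriv_succ', Function.iterate_succ_apply, ← ih]
    congr 1
    ext x
    exact P.deriv

lemma isLocalExtr_of_isLocalMax_abs {X : Type*} [TopologicalSpace X] {G : Type*} [AddCommGroup G]
    [LinearOrder G] [IsOrderedAddMonoid G] {f : X → G} {x : X}
    (h : IsLocalMax (fun y ↦ |f y|) x) : IsLocalExtr f x := by
  rcases le_total 0 (f x) with hx | hx
  · refine Or.inr (h.mono fun y hy ↦ ?_)
    exact (le_abs_self _).trans (hy.trans_eq (abs_of_nonneg hx))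
  · refine Or.inl (h.mono fun y hy ↦ ?_)
    exact neg_le_neg_iff.mp ((neg_le_abs _).trans (hy.trans_eq (abs_of_nonpos hx)))

lemma abs_sub_le_mul_sq_of_deriv_eq_zero {f : ℝ → ℝ} {x y C : ℝ} (hf : ContDiff ℝ 2 f)
    (hx : deriv f x = 0) (hC : ∀ z ∈ uIcc x y, |iteratedDeriv 2 f z| ≤ C) :
    |f y - f x| ≤ C / 2 * (y - x) ^ 2 := by
  rcases eq_or_ne x y with rfl | hxy
  · simp
  obtain ⟨z, hz, taylor⟩ :=
    taylor_mean_remainder_lagrange_iteratedDeriv (n := 1) hxy hf.contDiffOn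
  have derivWithin_eq : derivWithin f (uIcc x y) x = 0 := by
    rw [(hf.differentiable two_ne_zero x).derivWithin
      (uniqueDiffOn_uIcc hxy x left_mem_uIcc), hx]
  rw [taylorWithinEval_succ, taylor_within_zero_eval, iteratedDerivWithin_one,
    derivWithin_eq, smul_zero, add_zero] at taylor
  calc |f y - f x| = |iteratedDeriv 2 f z| / 2 * (y - x) ^ 2 := by
        rw [taylor, abs_div, abs_mul, abs_of_nonneg (sq_nonneg (y - x)), Nat.factorial_two,
          Nat.abs_cast, Nat.cast_two, mul_div_right_comm]
    _ ≤ C / 2 * (y - x) ^ 2 := by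
        gcongr
        exact hC z (Ioo_subset_Icc_self hz)

lemma abs_le_max_add_mul_sq_of_deriv_eq_zero {f : ℝ → ℝ} {a b x C : ℝ} (hf : ContDiff ℝ 2 f)
    (hx : x ∈ Icc a b) (hx' : deriv f x = 0) (hC : ∀ z ∈ Icc a b, |iteratedDeriv 2 f z| ≤ C) :
    |f x| ≤ max |f a| |f b| + C / 8 * (b - a) ^ 2 := by
  have hC_nonneg : 0 ≤ C := (abs_nonneg _).trans (hC x hx)
  obtain ⟨y, hy, hyf, hyx⟩ : ∃ y ∈ Icc a b, |f y| ≤ max |f a| |f b| ∧ |y - x| ≤ (b - a) / 2 := by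
    have hab := hx.1.trans hx.2
    rcases le_total (x - a) (b - x) with h | h
    · exact ⟨a, left_mem_Icc.mpr hab, le_max_left _ _, abs_le.mpr (by grind)⟩
    · exact ⟨b, right_mem_Icc.mpr hab, le_max_right _ _, abs_le.mpr (by grind)⟩
  calc |f x| ≤ |f y| + |f y - f x| := by
        linarith [abs_sub_abs_le_abs_sub (f x) (f y), abs_sub_comm (f x) (f y)]
    _ ≤ |f y| + C / 2 * |y - x| ^ 2 := by
        rw [sq_abs]
        gcongr
        exact abs_sub_le_mul_sq_of_deriv_eq_zero hf hx' fun z hz ↦ hC z (uIcc_subset_Icc hx hy hz)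
    _ ≤ max |f a| |f b| + C / 2 * ((b - a) / 2) ^ 2 := by gcongr
    _ = max |f a| |f b| + C / 8 * (b - a) ^ 2 := by ring

lemma exists_mem_Icc_one_div_succ_one_div {N : ℕ} {x : ℝ} (hx : 0 < x) (hxN : x ≤ 1 / N) :
    ∃ n : ℕ, N ≤ n ∧ x ∈ Icc (1 / ((n + 1 : ℕ) : ℝ)) (1 / n) := by
  have hN : (0 : ℝ) < N := one_div_pos.mp (hx.trans_le hxN)
  have hn : N ≤ ⌊1 / x⌋₊ := Nat.le_floor ((le_one_div hN hx).mpr hxN)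
  refine ⟨⌊1 / x⌋₊, hn, ?_, ?_⟩
  · rw [one_div_le (by positivity) hx]
    exact_mod_cast (Nat.lt_floor_add_one (1 / x)).le
  · rw [le_one_div hx (hN.trans_le (by exact_mod_cast hn))]
    exact Nat.floor_le (by positivity)

lemma norm_apply_zero_le_of_forall_norm_apply_one_div_le {E : Type*} [SeminormedAddCommGroup E]
    {f : ℝ → E} (hf : ContinuousAt f 0) {N : ℕ} {S : ℝ}
    (hS : ∀ n : ℕ, N ≤ n → ‖f (1 / n)‖ ≤ S) : ‖f 0‖ ≤ S :=
  le_of_tendsto (hf.norm.tendsto.comp tendsto_one_div_atTop_nhds_zero_nat)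
    ((eventually_ge_atTop N).mono hS)

lemma eval_iterate_derivative_T_nonneg (q k : ℕ) {x : ℝ} (hx : 1 ≤ x) :
    0 ≤ (derivative^[k] (Chebyshev.T ℝ q)).eval x := by
  simpa using Chebyshev.eval_iterate_derivative_le_of_forall_abs_le_one (n := q) (P := 0) (k := k)
    hx (by simp) (by simp)

lemma eval_one_iterate_derivative_T_le (q k : ℕ) :
    (derivative^[k] (Chebyshev.T ℝ q)).eval 1 ≤
      (q : ℝ) ^ (2 * k) / (Nat.doubleFactorial (2 * k - 1) : ℝ) := by
  induction k with
  | zero => simp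
  | succ k ih =>
    have recurrence := Chebyshev.iterate_derivative_T_eval_one_recurrence (R := ℝ) q k
    have doubleFactorial_succ :
        (Nat.doubleFactorial (2 * (k + 1) - 1) : ℝ) =
          (2 * k + 1) * Nat.doubleFactorial (2 * k - 1) := by
      rw [show 2 * (k + 1) - 1 = 2 * k + 1 by lia, Nat.doubleFactorial_add_one]
      push_cast
      rfl
    calc (derivative^[k + 1] (Chebyshev.T ℝ q)).eval 1
        = ((q : ℝ) ^ 2 - k ^ 2) * (derivative^[k] (Chebyshev.T ℝ q)).eval 1 / (2 * k + 1) := by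
          rw [eq_div_iff (by positivity), mul_comm, recurrence, Int.cast_natCast]
      _ ≤ (q : ℝ) ^ 2 * ((q : ℝ) ^ (2 * k) / (Nat.doubleFactorial (2 * k - 1) : ℝ)) /
            (2 * k + 1) := by
          gcongr
          · exact eval_iterate_derivative_T_nonneg q k le_rfl
          · linarith [sq_nonneg (k : ℝ)]
      _ = (q : ℝ) ^ (2 * (k + 1)) / (Nat.doubleFactorial (2 * (k + 1) - 1) : ℝ) := by
          rw [doubleFactorial_succ, mul_add_one, pow_add]
          field_simp

section

variable {P : ℝ[X]} {q : ℕ}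

lemma abs_eval_iterate_derivative_le_mul_T (hP : P.natDegree ≤ q) {M : ℝ}
    (hM : ∀ x ∈ Icc (-1 : ℝ) 1, |P.eval x| ≤ M) (k : ℕ) {x : ℝ} (hx : 1 ≤ x) :
    |(derivative^[k] P).eval x| ≤ M * (derivative^[k] (Chebyshev.T ℝ q)).eval x := by
  have hM_nonneg : 0 ≤ M := (abs_nonneg _).trans (hM 1 (by simp))
  rcases hM_nonneg.eq_or_lt with rfl | hM_pos
  · have hP_zero : P = 0 := eq_zero_of_infinite_isRoot P <|
      (Icc_infinite (by norm_num)).mono fun y hy ↦ abs_nonpos_iff.mp (hM y hy)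
    simp [hP_zero]
  have extremal {c : ℝ} (hc : |c| = M⁻¹) :
      c * (derivative^[k] P).eval x ≤ (derivative^[k] (Chebyshev.T ℝ q)).eval x := by
    rw [← eval_C_mul, ← iterate_derivative_C_mul]
    refine Chebyshev.eval_iterate_derivative_le_of_forall_abs_le_one hx
      (degree_le_of_natDegree_le ((natDegree_C_mul_le _ _).trans hP)) fun y hy ↦ ?_
    rw [eval_C_mul, abs_mul, hc, inv_mul_le_one₀ hM_pos]
    exact hM y hy
  have upper := extremal (abs_of_pos (inv_pos.mpr hM_pos))
  have lower := extremal (c := -M⁻¹) (by rw [abs_neg, abs_of_pos (inv_pos.mpr hM_pos)])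
  rw [inv_mul_le_iff₀ hM_pos] at upper
  rw [neg_mul_comm, inv_mul_le_iff₀ hM_pos] at lower
  exact abs_le'.mpr ⟨upper, lower⟩

lemma pow_mul_abs_eval_iterate_derivative_le_of_uIcc (hP : P.natDegree ≤ q) {s t M : ℝ}
    (hM : ∀ x ∈ uIcc s t, |P.eval x| ≤ M) (k : ℕ) :
    (|t - s| / 2) ^ k * |(derivative^[k] P).eval t| ≤
      (q : ℝ) ^ (2 * k) / (Nat.doubleFactorial (2 * k - 1) : ℝ) * M := by
  set L : ℝ[X] := C ((t - s) / 2) * X + C ((s + t) / 2) with hL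
  have hM_nonneg : 0 ≤ M := (abs_nonneg _).trans (hM s left_mem_uIcc)
  have natDegree_le : (P.comp L).natDegree ≤ q :=
    natDegree_comp_le.trans <| (Nat.mul_le_mul hP natDegree_linear_le).trans_eq (mul_one q)
  have bound : ∀ x ∈ Icc (-1 : ℝ) 1, |(P.comp L).eval x| ≤ M := by
    intro x hx
    rw [eval_comp]
    refine hM _ ?_
    rw [← segment_eq_uIcc]
    refine ⟨(1 - x) / 2, (1 + x) / 2, by linarith [hx.2], by linarith [hx.1], by ring, ?_⟩
    simp only [hL, eval_add, eval_mul, eval_C, eval_X, smul_eq_mul]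
    ring
  have eval_one : L.eval 1 = t := by
    simp only [hL, eval_add, eval_mul, eval_C, eval_X]
    ring
  calc (|t - s| / 2) ^ k * |(derivative^[k] P).eval t|
      = |(derivative^[k] (P.comp L)).eval 1| := by
        rw [iterate_derivative_comp_C_mul_X_add_C, eval_C_mul, eval_comp, eval_one, abs_mul,
          abs_pow, abs_div, abs_two]
    _ ≤ M * (derivative^[k] (Chebyshev.T ℝ q)).eval 1 :=
        abs_eval_iterate_derivative_le_mul_T natDegree_le bound k le_rfl
    _ ≤ M * ((q : ℝ) ^ (2 * k) / (Nat.doubleFactorial (2 * k - 1) : ℝ)) := by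
        gcongr
        exact eval_one_iterate_derivative_T_le q k
    _ = (q : ℝ) ^ (2 * k) / (Nat.doubleFactorial (2 * k - 1) : ℝ) * M := mul_comm _ _

lemma pow_mul_abs_eval_iterate_derivative_le_of_Icc (hP : P.natDegree ≤ q) {a b t M : ℝ}
    (hM : ∀ x ∈ Icc a b, |P.eval x| ≤ M) (ht : t ∈ Icc a b) (k : ℕ) :
    ((b - a) / 4) ^ k * |(derivative^[k] P).eval t| ≤
      (q : ℝ) ^ (2 * k) / (Nat.doubleFactorial (2 * k - 1) : ℝ) * M := by
  have hab := ht.1.trans ht.2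
  obtain ⟨s, hs, hst⟩ : ∃ s ∈ Icc a b, (b - a) / 2 ≤ |t - s| := by
    rcases le_total (b - t) (t - a) with h | h
    · exact ⟨a, left_mem_Icc.mpr hab, le_abs.mpr (Or.inl (by linarith))⟩
    · exact ⟨b, right_mem_Icc.mpr hab, le_abs.mpr (Or.inr (by linarith))⟩
  calc ((b - a) / 4) ^ k * |(derivative^[k] P).eval t|
      ≤ (|t - s| / 2) ^ k * |(derivative^[k] P).eval t| := by
        have : 0 ≤ (b - a) / 4 := by linarith
        gcongr ?_ ^ k * _
        linarith
    _ ≤ (q : ℝ) ^ (2 * k) / (Nat.doubleFactorial (2 * k - 1) : ℝ) * M :=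
        pow_mul_abs_eval_iterate_derivative_le_of_uIcc hP
          (fun x hx ↦ hM x (uIcc_subset_Icc hs ht hx)) k

lemma abs_iteratedDeriv_two_eval_le (hP : P.natDegree ≤ q) {M a b x : ℝ} (ha : 0 < a)
    (hM : ∀ z ∈ Icc 0 b, |P.eval z| ≤ M) (hx : x ∈ Icc a b) :
    |iteratedDeriv 2 (fun z ↦ P.eval z) x| ≤ 4 / 3 * (q : ℝ) ^ 4 * M / a ^ 2 := by
  have hx_pos : 0 < x := ha.trans_le hx.1
  have markov := pow_mul_abs_eval_iterate_derivative_le_of_uIcc hP (s := 0) (t := x) (M := M)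
    (fun z hz ↦ hM z (uIcc_subset_Icc ⟨le_rfl, hx_pos.le.trans hx.2⟩ ⟨hx_pos.le, hx.2⟩ hz)) 2
  rw [sub_zero, abs_of_pos hx_pos, ← congrFun (iteratedDeriv_polynomial_eval P 2)] at markov
  rw [le_div_iff₀ (by positivity)]
  calc |iteratedDeriv 2 (fun z ↦ P.eval z) x| * a ^ 2
      ≤ |iteratedDeriv 2 (fun z ↦ P.eval z) x| * x ^ 2 := by
        gcongr
        exact hx.1
    _ = 4 * ((x / 2) ^ 2 * |iteratedDeriv 2 (fun z ↦ P.eval z) x|) := by ring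
    _ ≤ 4 * ((q : ℝ) ^ (2 * 2) / (Nat.doubleFactorial (2 * 2 - 1) : ℝ) * M) := by gcongr
    _ = 4 / 3 * (q : ℝ) ^ 4 * M := by
        rw [show Nat.doubleFactorial (2 * 2 - 1) = 3 from rfl]
        push_cast
        ring

lemma abs_eval_le_max_add_of_deriv_eq_zero (hP : P.natDegree ≤ q) {n : ℕ} (hn : 0 < n)
    (hqn : q ^ 2 ≤ n) {M x : ℝ} (hM : ∀ z ∈ Icc (0 : ℝ) (1 / n), |P.eval z| ≤ M)
    (hx : x ∈ Icc (1 / ((n + 1 : ℕ) : ℝ)) (1 / n)) (hx' : deriv (fun z ↦ P.eval z) x = 0) :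
    |P.eval x| ≤ max |P.eval (1 / ((n + 1 : ℕ) : ℝ))| |P.eval (1 / n)| + M / 6 := by
  have hM_nonneg : 0 ≤ M := (abs_nonneg _).trans (hM 0 ⟨le_rfl, by positivity⟩)
  have hqn' : (q : ℝ) ^ 2 / n ≤ 1 := div_le_one_of_le₀ (by exact_mod_cast hqn) (by positivity)
  calc |P.eval x|
      ≤ max |P.eval (1 / ((n + 1 : ℕ) : ℝ))| |P.eval (1 / n)| +
          4 / 3 * (q : ℝ) ^ 4 * M / (1 / ((n + 1 : ℕ) : ℝ)) ^ 2 / 8 *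
            (1 / n - 1 / ((n + 1 : ℕ) : ℝ)) ^ 2 :=
        abs_le_max_add_mul_sq_of_deriv_eq_zero (P.contDiff_aeval 2) hx hx' fun z hz ↦
          abs_iteratedDeriv_two_eval_le hP (by positivity) hM hz
    _ = max |P.eval (1 / ((n + 1 : ℕ) : ℝ))| |P.eval (1 / n)| +
          ((q : ℝ) ^ 2 / n) ^ 2 * (M / 6) := by
        push_cast
        field_simp
        ring
    _ ≤ max |P.eval (1 / ((n + 1 : ℕ) : ℝ))| |P.eval (1 / n)| + 1 ^ 2 * (M / 6) := by gcongr
    _ = max |P.eval (1 / ((n + 1 : ℕ) : ℝ))| |P.eval (1 / n)| + M / 6 := by ring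

lemma abs_eval_le_two_mul_of_forall_abs_eval_one_div_le (hP : P.natDegree ≤ q) {N : ℕ}
    (hN : 0 < N) (hqN : q ^ 2 ≤ N) {S : ℝ} (hS : ∀ n : ℕ, N ≤ n → |P.eval (1 / (n : ℝ))| ≤ S)
    {x : ℝ} (hx : x ∈ Icc (0 : ℝ) (1 / N)) : |P.eval x| ≤ 2 * S := by
  have hS_nonneg : 0 ≤ S := (abs_nonneg _).trans (hS N le_rfl)
  obtain ⟨x₀, hx₀, hmax⟩ := isCompact_Icc.exists_isMaxOn ⟨x, hx⟩
    (f := fun z ↦ |P.eval z|) P.continuous.abs.continuousOn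
  suffices hx₀_le : |P.eval x₀| ≤ 2 * S from (hmax hx).trans hx₀_le
  rcases hx₀.1.eq_or_lt with rfl | hx₀_pos
  · linarith [norm_apply_zero_le_of_forall_norm_apply_one_div_le P.continuousAt hS,
      Real.norm_eq_abs (P.eval 0)]
  rcases hx₀.2.eq_or_lt with rfl | hx₀_lt
  · linarith [hS N le_rfl]
  have critical : deriv (fun z ↦ P.eval z) x₀ = 0 :=
    (isLocalExtr_of_isLocalMax_abs (hmax.isLocalMax (Icc_mem_nhds hx₀_pos hx₀_lt))).deriv_eq_zero
  obtain ⟨n, hNn, hx₀_mem⟩ := exists_mem_Icc_one_div_succ_one_div hx₀_pos hx₀.2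
  have one_div_le : 1 / (n : ℝ) ≤ 1 / N := by gcongr
  have self_bound := abs_eval_le_max_add_of_deriv_eq_zero hP (hN.trans_le hNn) (hqN.trans hNn)
    (fun z hz ↦ hmax ⟨hz.1, hz.2.trans one_div_le⟩) hx₀_mem critical
  have grid_bound := max_le (hS (n + 1) (hNn.trans n.le_succ)) (hS n hNn)
  linarith

lemma abs_eval_one_div_le_sSup (P : ℝ[X]) {N n : ℕ} (hn : N ≤ n) :
    |P.eval (1 / (n : ℝ))| ≤ sSup {y : ℝ | ∃ m : ℕ, N ≤ m ∧ y = |P.eval (1 / (m : ℝ))|} := by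
  refine le_csSup (BddAbove.mono ?_ (isCompact_Icc.bddAbove_image
    (P.continuous.abs.continuousOn (s := Icc (0 : ℝ) 1)))) ⟨n, hn, rfl⟩
  rintro _ ⟨m, -, rfl⟩
  exact ⟨1 / m, ⟨Nat.one_div_cast_nonneg m, by simpa using Nat.cast_inv_le_one m⟩, rfl⟩

theorem markov_brothers_interpolated_general (hP : P.natDegree ≤ q) {N : ℕ} (hN : 0 < N)
    (hqN : q ^ 2 ≤ N) (k : ℕ) {t : ℝ} (ht : t ∈ Icc (0 : ℝ) (1 / N)) :
    |iteratedDeriv k (fun s ↦ P.eval s) t| ≤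
      (2 : ℝ) ^ (2 * k + 1) * (q : ℝ) ^ (2 * k) * (N : ℝ) ^ k /
          (Nat.doubleFactorial (2 * k - 1) : ℝ) *
        sSup {y : ℝ | ∃ n : ℕ, N ≤ n ∧ y = |P.eval (1 / (n : ℝ))|} := by
  set S := sSup {y : ℝ | ∃ n : ℕ, N ≤ n ∧ y = |P.eval (1 / (n : ℝ))|}
  have sup_bound : ∀ x ∈ Icc (0 : ℝ) (1 / N), |P.eval x| ≤ 2 * S := fun x hx ↦
    abs_eval_le_two_mul_of_forall_abs_eval_one_div_le hP hN hqN
      (fun n hn ↦ abs_eval_one_div_le_sSup P hn) hx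
  have markov := pow_mul_abs_eval_iterate_derivative_le_of_Icc hP sup_bound ht k
  have scale : (2 ^ 2 * (N : ℝ)) ^ k * ((1 / N - 0) / 4) ^ k = 1 := by
    rw [← mul_pow, show 2 ^ 2 * (N : ℝ) * ((1 / N - 0) / 4) = 1 by field_simp; norm_num, one_pow]
  rw [iteratedDeriv_polynomial_eval]
  calc |(derivative^[k] P).eval t|
      = (2 ^ 2 * (N : ℝ)) ^ k * (((1 / N - 0) / 4) ^ k * |(derivative^[k] P).eval t|) := by
        rw [← mul_assoc, scale, one_mul]
    _ ≤ (2 ^ 2 * (N : ℝ)) ^ k *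
          ((q : ℝ) ^ (2 * k) / (Nat.doubleFactorial (2 * k - 1) : ℝ) * (2 * S)) := by gcongr
    _ = _ := by
        rw [mul_pow, ← pow_mul]
        ring

end

theorem markov_brothers_interpolated
    (q : ℕ) (hq : 1 ≤ q) (P : Polynomial ℝ) (hP : P.natDegree ≤ q) (k : ℕ) :
    ∀ t ∈ Set.Icc (0 : ℝ) (1 / (2 * (q : ℝ) ^ 2)),
      |iteratedDeriv k (fun s => P.eval s) t| ≤
        ((2 : ℝ) ^ (2 * k + 1) * (q : ℝ) ^ (4 * k) / (Nat.doubleFactorial (2 * k - 1) : ℝ)) *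
          sSup {y : ℝ | ∃ n : ℕ, q ^ 2 ≤ n ∧ y = |P.eval (1 / (n : ℝ))|} := by
  intro t ht
  have ht' : t ∈ Icc (0 : ℝ) (1 / (q ^ 2 : ℕ)) := by
    refine ⟨ht.1, ht.2.trans ?_⟩
    push_cast
    gcongr
    linarith [sq_nonneg (q : ℝ)]
  convert markov_brothers_interpolated_general hP (by positivity) le_rfl k ht' using 3
  push_cast
  ring
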